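/- arXiv:2401.14951 — 6 statements merged into one kernel-verified Lean document; each statement's English description precedes it below -/
import Mathlib

section
/- Let $w : \mathbb{C} \times \mathbb{R} \to \mathbb{C} \times \mathbb{C} \times \mathbb{R}$ be $w(z,t) = \big(z(1+t)/\sqrt{2+2t^2},\ \overline{z}(1-t)/\sqrt{2+2t^2},\ -t^2\big)$, viewed as a map of real normed vector spaces. Then $w$ is infinitely differentiable (of class $C^\infty$ over $\mathbb{R}$), and the real Fréchet derivative of $w$ at a point $(z,t)$ is injective if and only if $(z,t) \neq (0,0)$. -/
/-!
Put `a(t) = (1+t)/√(2+2t²)` and `b(t) = (1-t)/√(2+2t²) = a(-t)`, so that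
`w(z,t) = (a(t) z, b(t) z̄, -t²)`. These satisfy `a' = b/(1+t²)` and `b' = -a/(1+t²)`, whence
`dw_{(z,t)}(v,s) = (a v + s b z/(1+t²), b v̄ - s a z̄/(1+t²), -2ts)`.

Suppose this vanishes. If `t ≠ 0`, the last component gives `s = 0`, and then `v = 0` because
`a` and `b` have no common zero. If `t = 0`, then `a = b ≠ 0`, so `v + s z = 0` and `v̄ - s z̄ = 0`;
hence `v = 0` and `s z = 0`, which forces `s = 0` when `z ≠ 0`. At the origin `(0,1)` is in the
kernel.
-/

/-- The local model map `w(z,t) = (z(1+t)/√(2+2t²), z̄(1-t)/√(2+2t²), -t²)`. -/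
noncomputable def w (p : ℂ × ℝ) : ℂ × ℂ × ℝ :=
  (p.1 * ((1 + p.2 : ℝ) : ℂ) / ((Real.sqrt (2 + 2 * p.2 ^ 2) : ℝ) : ℂ),
   (starRingEnd ℂ) p.1 * ((1 - p.2 : ℝ) : ℂ) / ((Real.sqrt (2 + 2 * p.2 ^ 2) : ℝ) : ℂ),
   -p.2 ^ 2)

/-- The coefficient `a(t) = (1+t)/√(2+2t²)` of `z` in the first component of `w`; the coefficient
of `z̄` in the second component is `a(-t)`. -/
noncomputable def wCoeff (t : ℝ) : ℝ := (1 + t) / Real.sqrt (2 + 2 * t ^ 2)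

lemma w_eq : w = fun p : ℂ × ℝ =>
    (wCoeff p.2 • p.1, wCoeff (-p.2) • Complex.conjCLE p.1, -p.2 ^ 2) := by
  funext p
  simp only [w, wCoeff, Complex.real_smul, Complex.conjCLE_apply, neg_sq, Complex.ofReal_div]
  refine Prod.ext ?_ (Prod.ext ?_ rfl)
  · dsimp only; ring
  · dsimp only; rw [← sub_eq_add_neg]; ring

lemma contDiff_wCoeff : ContDiff ℝ (⊤ : ℕ∞) wCoeff := by
  have hpos : ∀ t : ℝ, 2 + 2 * t ^ 2 ≠ 0 := fun t => by positivity
  refine ContDiff.div (by fun_prop) (ContDiff.sqrt (by fun_prop) hpos) fun t => ?_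
  positivity

lemma hasDerivAt_wCoeff (t : ℝ) : HasDerivAt wCoeff (wCoeff (-t) / (1 + t ^ 2)) t := by
  have hpos : 0 < 2 + 2 * t ^ 2 := by positivity
  have hq : HasDerivAt (fun t : ℝ => 2 + 2 * t ^ 2) (4 * t) t := by
    refine (((hasDerivAt_pow 2 t).const_mul 2).const_add 2).congr_deriv ?_
    norm_num; ring
  have h := ((hasDerivAt_id t).const_add 1).div (hq.sqrt hpos.ne') (by positivity)
  refine h.congr_deriv ?_
  have hs : Real.sqrt (2 + 2 * t ^ 2) ^ 2 = 2 + 2 * t ^ 2 := Real.sq_sqrt hpos.le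
  have hs0 : Real.sqrt (2 + 2 * t ^ 2) ≠ 0 := by positivity
  simp only [wCoeff, neg_sq, id]
  generalize Real.sqrt (2 + 2 * t ^ 2) = r at hs hs0 ⊢
  have h1 : 1 + t ^ 2 ≠ 0 := by positivity
  field_simp
  rw [hs]
  ring

lemma fderiv_w_apply (p q : ℂ × ℝ) : fderiv ℝ w p q =
    (wCoeff p.2 • q.1 + (q.2 * (wCoeff (-p.2) / (1 + p.2 ^ 2))) • p.1,
     wCoeff (-p.2) • (starRingEnd ℂ) q.1
       - (q.2 * (wCoeff p.2 / (1 + p.2 ^ 2))) • (starRingEnd ℂ) p.1,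
     -(2 * p.2 * q.2)) := by
  have h1 : HasFDerivAt (fun p : ℂ × ℝ => p.1) (ContinuousLinearMap.fst ℝ ℂ ℝ) p := hasFDerivAt_fst
  have h2 : HasFDerivAt (fun p : ℂ × ℝ => p.2) (ContinuousLinearMap.snd ℝ ℂ ℝ) p := hasFDerivAt_snd
  have hc : HasFDerivAt (fun p : ℂ × ℝ => Complex.conjCLE p.1)
      ((Complex.conjCLE : ℂ →L[ℝ] ℂ).comp (ContinuousLinearMap.fst ℝ ℂ ℝ)) p :=
    (Complex.conjCLE : ℂ →L[ℝ] ℂ).hasFDerivAt.comp p h1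
  have ha := (hasDerivAt_wCoeff p.2).comp_hasFDerivAt p h2
  have hb := (hasDerivAt_wCoeff (-p.2)).comp_hasFDerivAt p h2.neg
  have h := (ha.smul h1).prodMk ((hb.smul hc).prodMk (h2.pow 2).neg)
  have hw := h.congr_of_eventuallyEq (Filter.EventuallyEq.of_eq w_eq)
  rw [hw.fderiv]
  refine Prod.ext ?_ (Prod.ext ?_ ?_)
  · simp
    exact Or.inl (by ring)
  · simp
    ring
  · simp

theorem stmt3 :
    ContDiff ℝ (⊤ : ℕ∞) w ∧
    ∀ p : ℂ × ℝ, Function.Injective (fderiv ℝ w p) ↔ p ≠ ((0 : ℂ), (0 : ℝ)) := by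
  constructor
  · rw [w_eq]
    refine ((contDiff_wCoeff.comp contDiff_snd).smul contDiff_fst).prodMk
      (((contDiff_wCoeff.comp contDiff_snd.neg).smul
        (Complex.conjCLE.contDiff.comp contDiff_fst)).prodMk (contDiff_snd.pow 2).neg)
  · rintro ⟨z, t⟩
    constructor
    · rintro hinj h0
      obtain ⟨rfl, rfl⟩ := Prod.mk.inj h0
      have : ((0 : ℂ), (1 : ℝ)) = 0 := hinj (by rw [map_zero, fderiv_w_apply]; simp)
      simp at this
    · intro hp
      rw [injective_iff_map_eq_zero]
      rintro ⟨v, s⟩ hv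
      rw [fderiv_w_apply] at hv
      simp only [Prod.mk_eq_zero] at hv
      obtain ⟨hv1, hv2, hv3⟩ := hv
      by_cases ht : t = 0
      · subst ht
        have hz : z ≠ 0 := fun hz => hp (by rw [hz])
        have ha : wCoeff 0 ≠ 0 := by simp [wCoeff]
        have e1 : v + (s : ℂ) * z = 0 := by
          have : (wCoeff 0 : ℂ) * (v + s * z) = 0 := by
            simp at hv1
            linear_combination hv1
          simpa [ha] using this
        have e2 : v - (s : ℂ) * z = 0 := by
          have : (wCoeff 0 : ℂ) * (v - s * z) = 0 := by
            have hv2 := congrArg (starRingEnd ℂ) hv2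
            simp at hv2
            linear_combination hv2
          simpa [ha] using this
        have hv0 : v = 0 := by linear_combination (e1 + e2) / 2
        have hs0 : s = 0 := by simpa [hv0, hz] using e1
        rw [hv0, hs0]; rfl
      · have hs0 : s = 0 := by simpa [ht] using hv3
        subst hs0
        have hv0 : v = 0 := by
          by_contra hne
          have hr : Real.sqrt (2 + 2 * t ^ 2) ≠ 0 := by positivity
          simp [wCoeff, hne, hr] at hv1 hv2
          exact two_ne_zero (α := ℂ) (by linear_combination hv1 + hv2)
        rw [hv0]; rfl
end

section
/- Define $w'(z,t) = (z,\ zt,\ -t^2)$, $\xi(z,t) = \big(z/\sqrt{2+2t^2},\ t\big)$, and $\zeta(\alpha,\beta,s) = \big(\alpha+\beta,\ \overline{\alpha}-\overline{\beta},\ s\big)$, all as maps between $\mathbb{C}\times\mathbb{R}$ and $\mathbb{C}\times\mathbb{C}\times\mathbb{R}$ as appropriate. Then: (a) $\zeta \circ w' \circ \xi = w$, where $w(z,t) = \big(z(1+t)/\sqrt{2+2t^2},\ \overline{z}(1-t)/\sqrt{2+2t^2},\ -t^2\big)$; (b) $\xi$ is a bijection of $\mathbb{C}\times\mathbb{R}$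 which is $C^\infty$ over $\mathbb{R}$ with $C^\infty$ inverse $(z,t) \mapsto (z\sqrt{2+2t^2},\ t)$; (c) $\zeta$ is a bijective $\mathbb{R}$-linear map of $\mathbb{C}\times\mathbb{C}\times\mathbb{R}$. -/
/-- The generalized cross-cap normal form `w'(z,t) = (z, zt, -t²)`. -/
noncomputable def w' (p : ℂ × ℝ) : ℂ × ℂ × ℝ :=
  (p.1, p.1 * (p.2 : ℂ), -p.2 ^ 2)

/-- The source diffeomorphism `ξ(z,t) = (z/√(2+2t²), t)`. -/
noncomputable def ξ (p : ℂ × ℝ) : ℂ × ℝ :=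
  (p.1 / ((Real.sqrt (2 + 2 * p.2 ^ 2) : ℝ) : ℂ), p.2)

/-- The inverse of `ξ`: `(z,t) ↦ (z·√(2+2t²), t)`. -/
noncomputable def ξinv (p : ℂ × ℝ) : ℂ × ℝ :=
  (p.1 * ((Real.sqrt (2 + 2 * p.2 ^ 2) : ℝ) : ℂ), p.2)

/-- The target linear isomorphism `ζ(α,β,s) = (α+β, ᾱ-β̄, s)`. -/
noncomputable def ζ (q : ℂ × ℂ × ℝ) : ℂ × ℂ × ℝ :=
  (q.1 + q.2.1, (starRingEnd ℂ) q.1 - (starRingEnd ℂ) q.2.1, q.2.2)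

theorem sqrt_ofReal_ne_zero (t : ℝ) : ((Real.sqrt (2 + 2 * t ^ 2) : ℝ) : ℂ) ≠ 0 := by
  have h : 0 < Real.sqrt (2 + 2 * t ^ 2) := Real.sqrt_pos.mpr (by positivity)
  exact_mod_cast h.ne'

theorem contDiff_sqrt_ofReal :
    ContDiff ℝ (⊤ : ℕ∞) (fun p : ℂ × ℝ => ((Real.sqrt (2 + 2 * p.2 ^ 2) : ℝ) : ℂ)) := by
  have h : ContDiff ℝ (⊤ : ℕ∞) (fun p : ℂ × ℝ => Real.sqrt (2 + 2 * p.2 ^ 2)) :=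
    ContDiff.sqrt (by fun_prop) (fun p => by positivity)
  exact Complex.ofRealCLM.contDiff.comp h

theorem leftInverse_ξinv : Function.LeftInverse ξinv ξ := fun p =>
  Prod.ext (div_mul_cancel₀ _ (sqrt_ofReal_ne_zero p.2)) rfl

theorem rightInverse_ξinv : Function.RightInverse ξinv ξ := fun p =>
  Prod.ext (mul_div_cancel_right₀ _ (sqrt_ofReal_ne_zero p.2)) rfl

theorem isLinearMap_ζ : IsLinearMap ℝ ζ where
  map_add x y := by
    ext1
    · simp only [ζ, Prod.fst_add, Prod.snd_add]; ring
    · ext1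
      · simp only [ζ, Prod.fst_add, Prod.snd_add, map_add]; ring
      · rfl
  map_smul c x := by
    ext1
    · simp [ζ]
    · ext1
      · simp [ζ, mul_sub]
      · rfl

theorem bijective_ζ : Function.Bijective ζ := by
  -- Solving `a = α + β`, `conj b = α - β` gives the inverse explicitly.
  refine Function.bijective_iff_has_inverse.mpr
    ⟨fun q => ((q.1 + (starRingEnd ℂ) q.2.1) / 2, (q.1 - (starRingEnd ℂ) q.2.1) / 2, q.2.2),
      fun q => ?_, fun q => ?_⟩
  · ext1
    · simp only [ζ, map_sub, Complex.conj_conj]; ring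
    · ext1
      · simp only [ζ, map_sub, Complex.conj_conj]; ring
      · rfl
  · ext1
    · simp only [ζ]; ring
    · ext1
      · simp only [ζ, map_add, map_sub, map_div₀, map_ofNat, Complex.conj_conj]; ring
      · rfl

theorem stmt5 :
    (ζ ∘ w' ∘ ξ = w) ∧
    (Function.Bijective ξ ∧ ContDiff ℝ (⊤ : ℕ∞) ξ ∧ ContDiff ℝ (⊤ : ℕ∞) ξinv ∧
      Function.LeftInverse ξinv ξ ∧ Function.RightInverse ξinv ξ) ∧
    (IsLinearMap ℝ ζ ∧ Function.Bijective ζ) := by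
  refine ⟨?_, ⟨⟨leftInverse_ξinv.injective, rightInverse_ξinv.surjective⟩, ?_, ?_,
    leftInverse_ξinv, rightInverse_ξinv⟩, isLinearMap_ζ, bijective_ζ⟩
  · funext p
    ext1
    · simp only [Function.comp, ζ, w', ξ, w]
      push_cast
      ring
    · ext1
      · simp only [Function.comp, ζ, w', ξ, w, map_mul, map_div₀, Complex.conj_ofReal]
        push_cast
        ring
      · rfl
  · unfold ξ
    simp only [div_eq_mul_inv]
    exact (contDiff_fst.mul (contDiff_sqrt_ofReal.inv fun p => sqrt_ofReal_ne_zero p.2)).prodMk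
      contDiff_snd
  · exact (contDiff_fst.mul contDiff_sqrt_ofReal).prodMk contDiff_snd
end

section
/- Let $k \ge 1$ be an integer and define $f : \mathbb{C}^2 \to \mathbb{C}^3$ by $f(u,v) = (u,\ v^2,\ v^3 + u^{k+1}v)$. Then the closure in $\mathbb{C}^2$ of the set $\{(u,v) : \exists (u',v') \neq (u,v) \text{ with } f(u,v) = f(u',v')\}$ equals $\{(u,v) \in \mathbb{C}^2 : v^2 + u^{k+1} = 0\}$. -/
/-!
Two distinct points with the same image under `Sk k` must be `(u, v)` and `(u, -v)` with `v ≠ 0`,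
and then `v ^ 3 + u ^ (k + 1) * v = 0`, so the double points are exactly the points of the curve
`v ^ 2 + u ^ (k + 1) = 0` with `v ≠ 0`. The curve is closed, and its only point with `v = 0` is
the origin, which is the limit of the points `(t ^ 2, I * t ^ (k + 1))` as `t → 0`, `t ≠ 0`.
-/

/-- Mond's simple germ `S_k : (u,v) ↦ (u, v², v³ + u^{k+1} v)`. -/
def Sk (k : ℕ) (q : ℂ × ℂ) : ℂ × ℂ × ℂ :=
  (q.1, q.2 ^ 2, q.2 ^ 3 + q.1 ^ (k + 1) * q.2)

open Topology

theorem stmt12 (k : ℕ) (hk : 1 ≤ k) :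
    closure {q : ℂ × ℂ | ∃ q' : ℂ × ℂ, q' ≠ q ∧ Sk k q = Sk k q'} =
      {q : ℂ × ℂ | q.2 ^ 2 + q.1 ^ (k + 1) = 0} := by
  have hset : {q : ℂ × ℂ | ∃ q' : ℂ × ℂ, q' ≠ q ∧ Sk k q = Sk k q'} =
      {q : ℂ × ℂ | q.2 ≠ 0 ∧ q.2 ^ 2 + q.1 ^ (k + 1) = 0} := by
    ext ⟨u, v⟩
    simp only [Set.mem_ofPred_eq, Sk, Prod.mk.injEq]
    constructor
    · rintro ⟨⟨u', v'⟩, hne, hu, h2, h3⟩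
      dsimp only at hu h2 h3
      subst hu
      rcases sq_eq_sq_iff_eq_or_eq_neg.mp h2 with h | h
      · exact absurd (by rw [h]) hne
      · have hv' : v' = -v := by rw [h, neg_neg]
        subst hv'
        have hv : v ≠ 0 := by
          rintro rfl
          exact hne (by simp)
        refine ⟨hv, ?_⟩
        have h0 : (2 * v) * (v ^ 2 + u ^ (k + 1)) = 0 := by linear_combination h3
        exact (mul_eq_zero.mp h0).resolve_left (mul_ne_zero two_ne_zero hv)
    · rintro ⟨hv, h⟩
      refine ⟨(u, -v), fun he => hv ?_, rfl, by ring, by linear_combination 2 * v * h⟩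
      exact self_eq_neg.mp (Prod.mk.inj he).2.symm
  rw [hset]
  apply Set.Subset.antisymm
  · refine closure_minimal (fun q hq => hq.2) ?_
    exact isClosed_eq (by fun_prop) continuous_const
  · rintro ⟨u, v⟩ h
    by_cases hv : v = 0
    · subst hv
      have hu : u = 0 := by simpa using h
      subst hu
      have hc : Continuous fun t : ℂ => (t ^ 2, Complex.I * t ^ (k + 1)) := by fun_prop
      have ht : Filter.Tendsto (fun t : ℂ => (t ^ 2, Complex.I * t ^ (k + 1))) (𝓝[≠] 0)
          (𝓝 ((0 : ℂ), (0 : ℂ))) := by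
        have := hc.tendsto 0
        simp only [ne_eq, OfNat.ofNat_ne_zero, not_false_eq_true, zero_pow, Nat.succ_ne_zero,
          mul_zero] at this
        exact this.mono_left nhdsWithin_le_nhds
      refine mem_closure_of_tendsto ht ?_
      filter_upwards [self_mem_nhdsWithin] with t ht0
      refine ⟨mul_ne_zero Complex.I_ne_zero (pow_ne_zero _ ht0), ?_⟩
      rw [mul_pow, Complex.I_sq]
      ring
    · exact subset_closure ⟨hv, h⟩
end

section
/- Let $k \ge 2$ be an integer, let $\rho = e^{2\pi i/3}$ be a primitive cube root of unity, and define $f : \mathbb{C}^2 \to \mathbb{C}^3$ by $f(u,v) = (u,\ uv + v^{3k-1},\ v^3)$. Then the closure in $\mathbb{C}^2$ of the set $\{(u,v) : \exists (u',v') \neq (u,v) \text{ with } f(u,v) = f(u',v')\}$ equals $\{(u,v) \in \mathbb{C}^2 : (u - \rho v^{3k-2})(u - \rho^2 v^{3k-2}) = 0\}$. -/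
/-!
If `f(u,v) = f(u',v')` with distinct sources, then `u' = u`, `v ≠ 0` and `v' = ωv` with `ω ≠ 1`
a cube root of unity. As `ω ^ (3k-1) = ω²`, comparing second coordinates gives
`u(1 - ω) = (ω² - 1) v ^ (3k-2)`, i.e. `u = -(1 + ω) v ^ (3k-2) = ω² v ^ (3k-2)`. So the set of
double points is the curve with the origin removed (`mem_doublePoints_iff`), and the origin is a
limit of points `(ρ t ^ (3k-2), t)` with `t ≠ 0`.
-/

/-- Mond's simple germ `H_k : (u,v) ↦ (u, uv + v^{3k-1}, v³)`. -/
def Hk (k : ℕ) (q : ℂ × ℂ) : ℂ × ℂ × ℂ :=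
  (q.1, q.1 * q.2 + q.2 ^ (3 * k - 1), q.2 ^ 3)

/-- The double points, before closure, are the points of the curve with `v ≠ 0`.
Here `k = m + 1`, so that the exponents are free of truncated subtraction. -/
lemma mem_doublePoints_iff {r : ℂ} (hr : r ^ 2 + r + 1 = 0) (m : ℕ) (q : ℂ × ℂ) :
    (∃ q' : ℂ × ℂ, q' ≠ q ∧ Hk (m + 1) q = Hk (m + 1) q') ↔
      q.2 ≠ 0 ∧ (q.1 - r * q.2 ^ (3 * m + 1)) * (q.1 - r ^ 2 * q.2 ^ (3 * m + 1)) = 0 := by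
  obtain ⟨u, v⟩ := q
  have e : 3 * (m + 1) - 1 = 3 * m + 2 := by omega
  have hr3 : r ^ 3 = 1 := by linear_combination (r - 1) * hr
  have hr1 : r ≠ 1 := by
    rintro rfl
    norm_num at hr
  have hr1' : r ^ 2 ≠ 1 := fun h => hr1 (by linear_combination hr3 - r * h)
  simp only [Hk, e, Prod.mk.injEq]
  have hP : ∀ w : ℂ, w ^ (3 * m + 2) = (w ^ 3) ^ m * w ^ 2 := fun w => by rw [pow_add, pow_mul]
  have hQ : v ^ (3 * m + 1) = (v ^ 3) ^ m * v := by rw [pow_add, pow_mul, pow_one]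
  rw [hQ]
  constructor
  · rintro ⟨⟨u', v'⟩, hne, hu, h2, h3⟩
    simp only at hu h2 h3 ⊢
    subst hu
    have hvv : v' ≠ v := fun h => hne (by rw [h])
    rw [hP, hP, ← h3] at h2
    -- `P` is the common value of `v ^ (3m)` and `v' ^ (3m)`.
    generalize (v ^ 3) ^ m = P at *
    have hv : v ≠ 0 := by
      rintro rfl
      exact hvv (pow_eq_zero_iff (n := 3) (by norm_num) |>.1 (by rw [← h3]; ring))
    refine ⟨hv, ?_⟩
    have hu : u = -P * (v + v') := by
      apply mul_left_cancel₀ (sub_ne_zero.2 hvv)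
      linear_combination -h2
    have hf : (v' - r * v) * (v' - r ^ 2 * v) = 0 := by
      apply mul_left_cancel₀ (sub_ne_zero.2 hvv)
      linear_combination -h3 + (v * v' * (v - v')) * hr + (v' * v ^ 2 - v ^ 3) * hr3
    rcases mul_eq_zero.1 hf with h | h
    · rw [hu, sub_eq_zero.1 h]
      linear_combination (P ^ 2 * v ^ 2 * (1 + 2 * r)) * hr
    · rw [hu, sub_eq_zero.1 h]
      linear_combination (P ^ 2 * v ^ 2 * (1 + 2 * r ^ 2)) * hr
  · rintro ⟨hv, h⟩
    rcases mul_eq_zero.1 h with h | h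
    · refine ⟨(u, r ^ 2 * v), ?_, rfl, ?_, ?_⟩
      · intro h'
        exact hr1' (mul_right_cancel₀ hv (by simpa using (Prod.mk.inj h').2))
      · have e3 : (r ^ 2 * v) ^ 3 = v ^ 3 := by linear_combination (v ^ 3 * (r ^ 3 + 1)) * hr3
        rw [hP, hP, e3]
        generalize (v ^ 3) ^ m = P at *
        rw [sub_eq_zero.1 h]
        linear_combination -(P * v ^ 2) * (1 + r) * hr3
      · linear_combination -(v ^ 3 * (r ^ 3 + 1)) * hr3
    · refine ⟨(u, r * v), ?_, rfl, ?_, ?_⟩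
      · intro h'
        exact hr1 (mul_right_cancel₀ hv (by simpa using (Prod.mk.inj h').2))
      · have e3 : (r * v) ^ 3 = v ^ 3 := by linear_combination v ^ 3 * hr3
        rw [hP, hP, e3]
        generalize (v ^ 3) ^ m = P at *
        rw [sub_eq_zero.1 h]
        linear_combination -(P * v ^ 2) * hr3
      · linear_combination -v ^ 3 * hr3

lemma exp_cube_root : Complex.exp (2 * Real.pi * Complex.I / 3) ^ 2 +
    Complex.exp (2 * Real.pi * Complex.I / 3) + 1 = 0 := by
  have h := Complex.isPrimitiveRoot_exp 3 (by norm_num)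
  have h' := h.geom_sum_eq_zero (by norm_num)
  simp only [Finset.sum_range_succ, Finset.sum_range_zero] at h'
  push_cast at h'
  linear_combination h'

theorem stmt13 (k : ℕ) (hk : 2 ≤ k) :
    closure {q : ℂ × ℂ | ∃ q' : ℂ × ℂ, q' ≠ q ∧ Hk k q = Hk k q'} =
      {q : ℂ × ℂ |
        (q.1 - Complex.exp (2 * Real.pi * Complex.I / 3) * q.2 ^ (3 * k - 2)) *
          (q.1 - Complex.exp (2 * Real.pi * Complex.I / 3) ^ 2 * q.2 ^ (3 * k - 2)) = 0} := by
  obtain ⟨m, rfl⟩ : ∃ m, k = m + 1 := ⟨k - 1, by omega⟩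
  have e : 3 * (m + 1) - 2 = 3 * m + 1 := by omega
  have hr := exp_cube_root
  generalize Complex.exp (2 * Real.pi * Complex.I / 3) = r at *
  simp only [mem_doublePoints_iff hr, e]
  apply Set.Subset.antisymm
  · refine closure_minimal (fun q hq => hq.2) (isClosed_eq ?_ continuous_const)
    fun_prop
  · rintro ⟨u, v⟩ h
    by_cases hv : v = 0
    · subst hv
      have hu : u = 0 := by simpa using h
      subst hu
      let g : ℂ → ℂ × ℂ := fun t => (r * t ^ (3 * m + 1), t)
      have hg : Continuous g := by fun_prop
      have h0 : (0 : ℂ) ∈ closure ({0}ᶜ : Set ℂ) := (dense_compl_singleton (0 : ℂ)) 0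
      have hg0 : g 0 = (0, 0) := by simp [g]
      rw [← hg0]
      refine map_mem_closure hg h0 fun t ht => ⟨ht, ?_⟩
      simp [g]
    · exact subset_closure ⟨hv, h⟩
end

section
/- Define $f : \mathbb{C}^2 \to \mathbb{C}^3$ by $f(u,v) = (u^2,\ v^2,\ u^3 + v^3 + uv)$. Then the closure in $\mathbb{C}^2$ of the set $\{(u,v) : \exists (u',v') \neq (u,v) \text{ with } f(u,v) = f(u',v')\}$ equals the zero set $\{(u,v) \in \mathbb{C}^2 : (u+v^2)(u^2+v)(u^3+v^3) = 0\}$. -/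
/-!
The set of points sharing their `fc2`-value with another point is exactly the curve
`(u + v²)(u² + v)(u³ + v³) = 0` with the origin removed (`exists_ne_fc2_eq_iff`). The curve is
closed, and the origin is a limit of its other points, so the closure is the whole curve.
-/

/-- The corank-2 germ `(u,v) ↦ (u², v², u³ + v³ + uv)`. -/
def fc2 (q : ℂ × ℂ) : ℂ × ℂ × ℂ :=
  (q.1 ^ 2, q.2 ^ 2, q.1 ^ 3 + q.2 ^ 3 + q.1 * q.2)

/-- Since `fc2` determines `u²` and `v²`, the other points of a fibre are sign changes of `(u, v)`.
Changing the sign of `u`, of `v`, or of both preserves the third coordinate exactly when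
`u (u² + v) = 0`, `v (u + v²) = 0`, or `u³ + v³ = 0` respectively. Away from the origin this gives
the three factors; the origin itself is alone in its fibre. -/
theorem exists_ne_fc2_eq_iff (q : ℂ × ℂ) :
    (∃ q' : ℂ × ℂ, q' ≠ q ∧ fc2 q = fc2 q') ↔
      (q.1 + q.2 ^ 2) * (q.1 ^ 2 + q.2) * (q.1 ^ 3 + q.2 ^ 3) = 0 ∧ q ≠ 0 := by
  obtain ⟨u, v⟩ := q
  simp only [fc2, Prod.mk.injEq, Prod.exists, ne_eq, Prod.mk_eq_zero, mul_eq_zero]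
  constructor
  · rintro ⟨a, b, hne, h1, h2, h3⟩
    rcases sq_eq_sq_iff_eq_or_eq_neg.mp h1 with rfl | rfl <;>
      rcases sq_eq_sq_iff_eq_or_eq_neg.mp h2 with rfl | rfl
    · simp at hne
    · have hb : b ≠ 0 := by rintro rfl; simp at hne
      refine ⟨Or.inl (Or.inl ?_), by simp [hb]⟩
      apply mul_left_cancel₀ hb
      linear_combination -h3 / 2
    · have ha : a ≠ 0 := by rintro rfl; simp at hne
      refine ⟨Or.inl (Or.inr ?_), by simp [ha]⟩
      apply mul_left_cancel₀ ha
      linear_combination -h3 / 2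
    · refine ⟨Or.inr (by linear_combination h3 / 2), ?_⟩
      rintro ⟨h, h'⟩
      rw [neg_eq_zero] at h h'
      simp [h, h'] at hne
  · rintro ⟨(h | h) | h, h0⟩
    · refine ⟨u, -v, ?_, by ring, by ring, by linear_combination 2 * v * h⟩
      rintro ⟨-, hv⟩
      have hv : v = 0 := by linear_combination -hv / 2
      subst hv
      exact h0 ⟨by simpa using h, rfl⟩
    · refine ⟨-u, v, ?_, by ring, by ring, by linear_combination 2 * u * h⟩
      rintro ⟨hu, -⟩
      have hu : u = 0 := by linear_combination -hu / 2
      subst hu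
      exact h0 ⟨rfl, by simpa using h⟩
    · refine ⟨-u, -v, ?_, by ring, by ring, by linear_combination 2 * h⟩
      rintro ⟨hu, hv⟩
      exact h0 ⟨by linear_combination -hu / 2, by linear_combination -hv / 2⟩

theorem stmt15 :
    closure {q : ℂ × ℂ | ∃ q' : ℂ × ℂ, q' ≠ q ∧ fc2 q = fc2 q'} =
      {q : ℂ × ℂ | (q.1 + q.2 ^ 2) * (q.1 ^ 2 + q.2) * (q.1 ^ 3 + q.2 ^ 3) = 0} := by
  apply subset_antisymm
  · refine closure_minimal (fun q hq => ((exists_ne_fc2_eq_iff q).mp hq).1) ?_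
    exact isClosed_eq (by fun_prop) continuous_const
  · intro q hq
    by_cases h0 : q = 0
    · subst h0
      -- The origin is approached along the line `u + v = 0`, a component of `u³ + v³ = 0`.
      have hlim : Filter.Tendsto (fun t : ℂ => ((t, -t) : ℂ × ℂ)) (nhdsWithin 0 {0}ᶜ)
          (nhds 0) := by
        have hc : Continuous (fun t : ℂ => ((t, -t) : ℂ × ℂ)) := by fun_prop
        simpa [← Prod.zero_eq_mk] using (hc.tendsto 0).mono_left nhdsWithin_le_nhds
      refine mem_closure_of_tendsto hlim ?_
      filter_upwards [self_mem_nhdsWithin] with t ht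
      have ht : t ≠ 0 := ht
      exact (exists_ne_fc2_eq_iff (t, -t)).mpr ⟨by ring, by simp [ht]⟩
    · exact subset_closure ((exists_ne_fc2_eq_iff q).mpr ⟨hq, h0⟩)
end

section
/- Let $k \ge 1$ be an integer, let $R = \mathbb{C}[[u,v]]$ be the formal power series ring in two variables over $\mathbb{C}$, and let $I \subseteq R$ be the ideal generated by $2v$, $3v^2 + u^{k+1}$, and $2(k+1)u^k v^2$. Then the quotient $R/I$ is a finite-dimensional $\mathbb{C}$-vector space of dimension $k+1$. -/
/-!
Since `2` is a unit, `v ∈ I`, and modulo `v` the other two generators become `u ^ (k + 1)` and `0`,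
so `I = (v, u ^ (k + 1))`. A power series lies in this ideal iff its coefficients at the monomials
`1, u, …, u ^ k` vanish (`mem_span_iff_coeff`). Hence `I` is the kernel of the surjective linear
map `lowCoeffs` onto `ℂ ^ (k + 1)` reading off these coefficients.
-/

open MvPowerSeries in
/-- The linear map sending a power series in `u, v` to its coefficients at `u ^ i`, `i ≤ k`. -/
noncomputable def lowCoeffs (k : ℕ) : MvPowerSeries (Fin 2) ℂ →ₗ[ℂ] (Fin (k + 1) → ℂ) :=
  LinearMap.pi fun i => coeff (Finsupp.single 0 (i : ℕ))

open MvPowerSeries in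
lemma mem_span_iff_coeff (k : ℕ) (f : MvPowerSeries (Fin 2) ℂ) :
    f ∈ Ideal.span {(X 1 : MvPowerSeries (Fin 2) ℂ), X 0 ^ (k + 1)} ↔
      ∀ i < k + 1, coeff (Finsupp.single 0 i) f = 0 := by
  rw [Ideal.mem_span_pair]
  constructor
  · rintro ⟨a, b, rfl⟩ i hi
    rw [map_add, X_dvd_iff.1 (Dvd.intro_left a rfl) _ (by simp),
      X_pow_dvd_iff.1 (Dvd.intro_left b rfl) _ (by simpa using hi), add_zero]
  · intro h
    -- `g` is the part of `f` free of `v`: it is divisible by `u ^ (k + 1)`, and `f - g` by `v`.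
    let g : MvPowerSeries (Fin 2) ℂ := fun m => if m 1 = 0 then coeff m f else 0
    have hg (m) : coeff m g = if m 1 = 0 then coeff m f else 0 := rfl
    obtain ⟨b, hb⟩ : X 0 ^ (k + 1) ∣ g := by
      rw [X_pow_dvd_iff]
      intro m hm
      rw [hg]
      split_ifs with h1
      · have : m = Finsupp.single 0 (m 0) := by
          ext j
          fin_cases j <;> simp [h1]
        rw [this]
        exact h _ hm
      · rfl
    obtain ⟨a, ha⟩ : X 1 ∣ f - g := by
      rw [X_dvd_iff]
      intro m hm
      rw [map_sub, hg, if_pos hm, sub_self]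
    exact ⟨a, b, by rw [mul_comm a, mul_comm b, ← ha, ← hb, sub_add_cancel]⟩

open MvPowerSeries in
lemma lowCoeffs_surjective (k : ℕ) : Function.Surjective (lowCoeffs k) := by
  intro c
  let f : MvPowerSeries (Fin 2) ℂ := fun m => if h : m 0 < k + 1 then c ⟨m 0, h⟩ else 0
  have hf (m) : coeff m f = if h : m 0 < k + 1 then c ⟨m 0, h⟩ else 0 := rfl
  refine ⟨f, ?_⟩
  ext i
  simp [lowCoeffs, hf, i.2, -Order.lt_add_one_iff]

lemma span_minors_eq {R : Type*} [CommRing R] [Algebra ℂ R] (u v c : R) (k : ℕ) :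
    Ideal.span {2 * v, 3 * v ^ 2 + u ^ (k + 1), 2 * c * u ^ k * v ^ 2} =
      Ideal.span {v, u ^ (k + 1)} := by
  apply le_antisymm
  · rw [Ideal.span_le]
    rintro x (rfl | rfl | rfl) <;> rw [SetLike.mem_coe, Ideal.mem_span_pair]
    · exact ⟨2, 0, by ring⟩
    · exact ⟨3 * v, 1, by ring⟩
    · exact ⟨2 * c * u ^ k * v, 0, by ring⟩
  · have h2 : algebraMap ℂ R (1 / 2) * 2 = 1 := by
      rw [← map_ofNat (algebraMap ℂ R) 2, ← map_mul]
      norm_num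
    rw [Ideal.span_le]
    rintro x (rfl | rfl) <;> rw [SetLike.mem_coe, Ideal.mem_span_insert]
    · exact ⟨algebraMap ℂ R (1 / 2), 0, zero_mem _, by linear_combination -x * h2⟩
    · refine ⟨-(3 * v * algebraMap ℂ R (1 / 2)), 3 * v ^ 2 + u ^ (k + 1),
        Ideal.subset_span (by simp), by linear_combination 3 * v ^ 2 * h2⟩

theorem stmt16 (k : ℕ) (hk : 1 ≤ k)
    (u v : MvPowerSeries (Fin 2) ℂ)
    (hu : u = MvPowerSeries.X 0) (hv : v = MvPowerSeries.X 1)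
    (I : Ideal (MvPowerSeries (Fin 2) ℂ))
    (hI : I = Ideal.span
      {2 * v, 3 * v ^ 2 + u ^ (k + 1), 2 * ((k : MvPowerSeries (Fin 2) ℂ) + 1) * u ^ k * v ^ 2}) :
    FiniteDimensional ℂ (MvPowerSeries (Fin 2) ℂ ⧸ I) ∧
      Module.finrank ℂ (MvPowerSeries (Fin 2) ℂ ⧸ I) = k + 1 := by
  rw [span_minors_eq, hu, hv] at hI
  have hker : I.restrictScalars ℂ = LinearMap.ker (lowCoeffs k) := by
    ext f
    rw [Submodule.restrictScalars_mem, hI, mem_span_iff_coeff, LinearMap.mem_ker, funext_iff]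
    exact ⟨fun h i => h i i.2, fun h i hi => h ⟨i, hi⟩⟩
  let e : (MvPowerSeries (Fin 2) ℂ ⧸ I) ≃ₗ[ℂ] (Fin (k + 1) → ℂ) :=
    (Submodule.Quotient.restrictScalarsEquiv ℂ I).symm ≪≫ₗ Submodule.quotEquivOfEq _ _ hker ≪≫ₗ
      (lowCoeffs k).quotKerEquivOfSurjective (lowCoeffs_surjective k)
  exact ⟨Module.Finite.equiv e.symm, by rw [e.finrank_eq, Module.finrank_fin_fun]⟩
end
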